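/- arXiv:q-alg/9703012 — 2 statements merged into one kernel-verified Lean document; each statement's English description precedes it below -/
import Mathlib

section
/- The R-linear map U^{≥0} ⊗_R U^{<0} → U induced by multiplication (x ⊗ y ↦ x·y) is bijective, i.e. multiplication induces an isomorphism of R-modules from U^{≥0} ⊗_R U^{<0} onto U. -/
open scoped TensorProduct

noncomputable section

/-- The base ring `R = ℂ[[ℏ]]`. -/
abbrev R : Type := PowerSeries ℂ

/-- The formal variable `ℏ ∈ ℂ[[ℏ]]`. -/
def hbar : R := PowerSeries.X

/-- The generators `e_n` of the free algebra. -/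
def E (n : ℤ) : FreeAlgebra R ℤ := FreeAlgebra.ι R n

/-- The defining relations of `U_ℏ𝔫₊`:
`e_{m+1}e_n − e_n e_{m+1} − e_m e_{n+1} + e_{n+1}e_m = ℏ(e_m e_n + e_n e_m)`. -/
inductive ERel : FreeAlgebra R ℤ → FreeAlgebra R ℤ → Prop
  | current (m n : ℤ) :
      ERel (E (m + 1) * E n - E n * E (m + 1) - E m * E (n + 1) + E (n + 1) * E m)
        (hbar • (E m * E n + E n * E m))

/-- `U = U_ℏ𝔫₊`, the quotient of the free `R`-algebra on the `e_n`, `n ∈ ℤ`,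
by the two-sided ideal generated by the defining relations. -/
abbrev U : Type := RingQuot ERel

/-- The image of `e_n` in `U`. -/
def e (n : ℤ) : U := RingQuot.mkAlgHom R ERel (E n)

/-- `U^{≥0}`, the `R`-subalgebra of `U` generated by the `e_n` with `n ≥ 0`. -/
def Uge : Subalgebra R U := Algebra.adjoin R (Set.range fun n : ℕ => e (n : ℤ))

/-- `U^{<0}`, the `R`-subalgebra of `U` generated by the `e_n` with `n < 0`. -/
def Ult : Subalgebra R U := Algebra.adjoin R {x : U | ∃ n : ℤ, n < 0 ∧ x = e n}

section Helpers

open MvPolynomial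

def Dz (z : ℂˣ) : Derivation ℂ (MvPolynomial ℤ ℂ) (MvPolynomial ℤ ℂ) :=
  mkDerivation ℂ (fun n => C (((z ^ n : ℂˣ)) : ℂ))


theorem Dz_X (z : ℂˣ) (n : ℤ) : Dz z (X n) = C (((z ^ n : ℂˣ)) : ℂ) := by
  simp [Dz]

theorem Dz_comm (z w : ℂˣ) (P : MvPolynomial ℤ ℂ) : Dz z (Dz w P) = Dz w (Dz z P) := by
  have h : ⁅Dz z, Dz w⁆ = 0 := by
    apply MvPolynomial.derivation_ext
    intro n
    simp [Derivation.commutator_apply, Dz]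
  have := congrArg (fun d => d P) h
  simpa [Derivation.commutator_apply, sub_eq_zero] using this

instance Dz_leftComm : LeftCommutative (fun (z : ℂˣ) (P : MvPolynomial ℤ ℂ) => Dz z P) :=
  ⟨fun z w P => Dz_comm z w P⟩

def QQ (S : Finset ℂˣ) (P : MvPolynomial ℤ ℂ) : MvPolynomial ℤ ℂ :=
  S.val.foldr (fun (z : ℂˣ) (P : MvPolynomial ℤ ℂ) => Dz z P) P

theorem QQ_empty (P) : QQ ∅ P = P := by simp [QQ]

theorem QQ_insert {z : ℂˣ} {S : Finset ℂˣ} (h : z ∉ S) (P) : QQ (insert z S) P = Dz z (QQ S P) := by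
  simp [QQ, Finset.insert_val_of_notMem h]

theorem QQ_Dz (z : ℂˣ) (S : Finset ℂˣ) (P) : Dz z (QQ S P) = QQ S (Dz z P) := by
  induction S using Finset.induction_on with
  | empty => simp [QQ_empty]
  | insert w S h ih => rw [QQ_insert h, QQ_insert h, Dz_comm, ih]

theorem QQ_sum {ι : Type*} (s : Finset ι) (c : ι → ℂ) (f : ι → MvPolynomial ℤ ℂ) (S : Finset ℂˣ) :
    QQ S (∑ i ∈ s, c i • f i) = ∑ i ∈ s, c i • QQ S (f i) := by
  induction S using Finset.induction_on with
  | empty => simp [QQ_empty]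
  | insert w S h ih => simp [QQ_insert h, ih]

theorem QQ_X_mul (n : ℤ) (P) (S : Finset ℂˣ) :
    QQ S (X n * P) = X n * QQ S P + ∑ z ∈ S, ((z ^ n : ℂˣ) : ℂ) • QQ (S.erase z) P := by
  induction S using Finset.induction_on with
  | empty => simp [QQ_empty]
  | insert w S h ih =>
    rw [QQ_insert h, ih, QQ_insert h, Finset.sum_insert h, Finset.erase_insert h, map_add,
      Derivation.leibniz, Dz_X, map_sum]
    have : ∀ z ∈ S, Dz w (((z ^ n : ℂˣ) : ℂ) • QQ (S.erase z) P) =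
        ((z ^ n : ℂˣ) : ℂ) • QQ ((insert w S).erase z) P := by
      intro z hz
      have hne : w ≠ z := by rintro rfl; exact h hz
      rw [Finset.erase_insert_of_ne hne, QQ_insert (by simp [h]), Derivation.map_smul]
    rw [Finset.sum_congr rfl this]
    simp only [smul_eq_mul, MvPolynomial.smul_eq_C_mul]
    ring

theorem QQ_one (S : Finset ℂˣ) : constantCoeff (QQ S 1) = if S = ∅ then 1 else 0 := by
  by_cases hS : S = ∅
  · simp [hS, QQ_empty]
  · obtain ⟨z, hz⟩ := Finset.nonempty_iff_ne_empty.mpr hS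
    rw [← Finset.insert_erase hz, QQ_insert (by simp), QQ_Dz, Derivation.map_one_eq_zero]
    have := QQ_sum (∅ : Finset ℕ) (fun _ => 0) (fun _ => 0) (S.erase z)
    simp at this
    simp [this]

theorem Dz_eq (z : ℂˣ) (P : MvPolynomial ℤ ℂ) :
    Dz z P = ∑ n ∈ P.vars, ((z ^ n : ℂˣ) : ℂ) • pderiv n P := by
  have hsum : ∀ Q, (∑ n ∈ P.vars, ((z ^ n : ℂˣ) : ℂ) • pderiv (R := ℂ) n) Q =
      ∑ n ∈ P.vars, (((z ^ n : ℂˣ) : ℂ) • pderiv (R := ℂ) n) Q := by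
    intro Q
    have := map_sum (Derivation.coeFnAddMonoidHom (R := ℂ) (A := MvPolynomial ℤ ℂ)
      (M := MvPolynomial ℤ ℂ)) (fun n => ((z ^ n : ℂˣ) : ℂ) • pderiv (R := ℂ) n) P.vars
    have h2 := congrFun this Q
    rw [Finset.sum_apply] at h2
    exact h2
  have h : Dz z P = (∑ n ∈ P.vars, ((z ^ n : ℂˣ) : ℂ) • pderiv (R := ℂ) n) P := by
    apply MvPolynomial.derivation_eq_of_forall_mem_vars
    intro i hi
    rw [Dz_X, hsum, Finset.sum_eq_single i]
    · simp [MvPolynomial.smul_eq_C_mul]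
    · intro j _ hj
      simp [pderiv_X_of_ne hj.symm]
    · intro h; exact absurd hi h
  rw [h, hsum]
  rfl

theorem laurent_zero (s : Finset ℤ) (a : ℤ → ℂ) (T : Finset ℂˣ)
    (h : ∀ z : ℂˣ, z ∉ T → ∑ n ∈ s, ((z ^ n : ℂˣ) : ℂ) * a n = 0) : ∀ n ∈ s, a n = 0 := by
  obtain ⟨N, hN⟩ : ∃ N : ℤ, ∀ n ∈ s, 0 ≤ n + N := by
    obtain ⟨b, hb⟩ := s.bddBelow
    exact ⟨-b, fun n hn => by have := hb hn; omega⟩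
  set p : Polynomial ℂ := ∑ n ∈ s, Polynomial.monomial (n + N).toNat (a n) with hp
  have h0 : p = 0 := by
    apply Polynomial.eq_zero_of_infinite_isRoot
    have hinf : (Set.range (fun z : ℂˣ => (z : ℂ)) \ (fun z : ℂˣ => (z : ℂ)) '' T).Infinite := by
      apply Set.Infinite.sdiff
      · have : Set.range (fun z : ℂˣ => (z : ℂ)) = {0}ᶜ := by
          ext x
          simp only [Set.mem_range, Set.mem_compl_iff, Set.mem_singleton_iff]
          exact ⟨by rintro ⟨z, rfl⟩; exact z.ne_zero, fun hx => ⟨Units.mk0 x hx, rfl⟩⟩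
        rw [this]
        exact (Set.finite_singleton 0).infinite_compl
      · exact T.finite_toSet.image _
    refine hinf.mono ?_
    rintro _ ⟨⟨z, rfl⟩, hz⟩
    have hzT : z ∉ T := fun hT => hz ⟨z, hT, rfl⟩
    have hh := h z hzT
    simp only [Set.mem_ofPred_eq, Polynomial.IsRoot.def, hp, Polynomial.eval_finsetSum, Polynomial.eval_monomial]
    have : ∀ n ∈ s, a n * (z : ℂ) ^ (n + N).toNat = ((z ^ N : ℂˣ) : ℂ) * (((z ^ n : ℂˣ) : ℂ) * a n) := by
      intro n hn
      have : (z : ℂ) ^ (n + N).toNat = ((z ^ n : ℂˣ) : ℂ) * ((z ^ N : ℂˣ) : ℂ) := by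
        rw [← Units.val_mul, ← zpow_add]
        conv_rhs => rw [← Int.toNat_of_nonneg (hN n hn)]
        rw [zpow_natCast, Units.val_pow_eq_pow_val]
      rw [this]; ring
    rw [Finset.sum_congr rfl this, ← Finset.mul_sum, hh, mul_zero]
  intro n hn
  have := congrArg (fun q => Polynomial.coeff q (n + N).toNat) h0
  simp only [hp, Polynomial.finsetSum_coeff, Polynomial.coeff_monomial, Polynomial.coeff_zero] at this
  rw [Finset.sum_eq_single n] at this
  · simpa using this
  · intro m hm hmn
    rw [if_neg]
    have := hN n hn; have := hN m hm
    omega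
  · intro h; exact absurd hn h

theorem QQ_inj (m : Multiset ℤ) : ∀ P : MvPolynomial ℤ ℂ,
    (∀ S, constantCoeff (QQ S P) = 0) → coeff (Multiset.toFinsupp m) P = 0 := by
  induction m using Multiset.induction_on with
  | empty =>
    intro P h
    have := h ∅
    rw [QQ_empty] at this
    simpa [constantCoeff_eq] using this
  | cons a s ih =>
    intro P h
    have key : coeff (Multiset.toFinsupp s) (pderiv a P) = 0 := by
      by_cases ha : a ∈ P.vars
      · apply ih
        intro T
        refine laurent_zero P.vars (fun n => constantCoeff (QQ T (pderiv n P))) T ?_ a ha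
        intro z hz
        have h1 := h (insert z T)
        rw [QQ_insert hz, QQ_Dz, Dz_eq, QQ_sum, map_sum] at h1
        simpa [MvPolynomial.smul_eq_C_mul] using h1
      · rw [pderiv_eq_zero_of_notMem_vars ha, coeff_zero]
    rw [coeff_pderiv] at key
    have h2 : ((Multiset.toFinsupp s a : ℂ) + 1) ≠ 0 := Nat.cast_add_one_ne_zero _
    have h3 := (mul_eq_zero.mp key).resolve_right h2
    rw [← Multiset.singleton_add, map_add, Multiset.toFinsupp_singleton, add_comm]
    exact h3

theorem e_rel (m n : ℤ) : e (m + 1) * e n - e n * e (m + 1) - e m * e (n + 1) + e (n + 1) * e m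
    = hbar • (e m * e n + e n * e m) := by
  have := RingQuot.mkAlgHom_rel R (ERel.current m n)
  simp only [map_add, map_sub, map_mul, map_smul] at this
  exact this

theorem u_sub_self (a : U) : a - a = 0 := by exact sub_self a
theorem u_mul_sub (a b c : U) : a * (b - c) = a * b - a * c := by exact mul_sub a b c
theorem u_sub_mul (a b c : U) : (a - b) * c = a * c - b * c := by exact sub_mul a b c
theorem u_sub_add_cancel (a b : U) : a - b + b = a := by exact sub_add_cancel a b
theorem u_sub_add_sub (a b c : U) : a - b + (b - c) = a - c := by
  exact sub_add_sub_cancel a b c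

theorem u_sub_swap_mem {M : Submodule R U} {a b : U} (h : a - b ∈ M) : b - a ∈ M := by
  have h1 : b - a = (-1 : R) • (a - b) := by
    have h2 : (a - b) + (-1 : R) • (a - b) = 0 := by
      conv_lhs => arg 1; rw [← one_smul R (a - b)]
      rw [← add_smul, add_neg_cancel, zero_smul]
    calc b - a = (b - a) + ((a - b) + (-1 : R) • (a - b)) := by rw [h2, add_zero]
      _ = (-1 : R) • (a - b) := by rw [← add_assoc, u_sub_add_sub, u_sub_self, zero_add]
  rw [h1]
  exact M.smul_mem _ h

theorem two_cancel {M : Submodule R U} {x : U} (h : x + x ∈ M) : x ∈ M := by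
  have h2 : (PowerSeries.C (1/2 : ℂ) : R) • (x + x) = x := by
    rw [← two_smul R x, smul_smul]
    have : (PowerSeries.C (1/2 : ℂ) : R) * 2 = 1 := by
      rw [show (2 : R) = PowerSeries.C (2 : ℂ) from (map_ofNat PowerSeries.C 2).symm, ← map_mul]; norm_num
    rw [this, one_smul]
  rw [← h2]
  exact M.smul_mem _ h

/-- span of quadratic monomials with letters in `[b, a]` and lower total degree -/
def quadSpan (J : Set ℤ) (s : ℤ) : Submodule R U :=
  Submodule.span R {x | ∃ c d : ℤ, c ∈ J ∧ d ∈ J ∧ c + d < s ∧ x = e c * e d}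

theorem quad_mem {J : Set ℤ} {s c d : ℤ} (hc : c ∈ J) (hd : d ∈ J) (h : c + d < s) :
    e c * e d ∈ quadSpan J s := Submodule.subset_span ⟨c, d, hc, hd, h, rfl⟩

theorem comm_mem (k : ℕ) : ∀ a b : ℤ, a - b = k →
    e a * e b - e b * e a ∈ quadSpan (Set.Icc b a) (a + b) := by
  induction k using Nat.strong_induction_on with
  | _ k ih =>
    intro a b hab
    match k, ih, hab with
    | 0, _, hab =>
      have : a = b := by push_cast at hab; omega
      subst this
      rw [u_sub_self]
      exact Submodule.zero_mem _
    | 1, _, hab =>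
      have : a = b + 1 := by push_cast at hab; omega
      subst this
      apply two_cancel
      have := e_rel b b
      have h2 : (e (b+1) * e b - e b * e (b+1)) + (e (b+1) * e b - e b * e (b+1)) =
          hbar • (e b * e b + e b * e b) := by rw [← this]; abel
      rw [h2]
      have hb : e b * e b ∈ quadSpan (Set.Icc b (b+1)) (b + 1 + b) :=
        quad_mem (by simp) (by simp) (by omega)
      exact Submodule.smul_mem _ _ (Submodule.add_mem _ hb hb)
    | k + 2, ih, hab =>
      have h1 := ih k (by omega) (a - 1) (b + 1) (by push_cast at hab; omega)
      have h2 := e_rel (a - 1) b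
      rw [sub_add_cancel] at h2
      have h3 : e a * e b - e b * e a = (e (a - 1) * e (b + 1) - e (b + 1) * e (a - 1)) +
          hbar • (e (a - 1) * e b + e b * e (a - 1)) := by rw [← h2]; abel
      rw [h3]
      have hle : quadSpan (Set.Icc (b + 1) (a - 1)) (a - 1 + (b + 1)) ≤
          quadSpan (Set.Icc b a) (a + b) := by
        apply Submodule.span_mono
        rintro x ⟨c, d, hc, hd, h, rfl⟩
        exact ⟨c, d, ⟨by have := hc.1; omega, by have := hc.2; omega⟩,
          ⟨by have := hd.1; omega, by have := hd.2; omega⟩, by omega, rfl⟩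
      push_cast at hab
      refine Submodule.add_mem _ (hle h1) (Submodule.smul_mem _ _ (Submodule.add_mem _ ?_ ?_))
      · exact quad_mem ⟨by omega, by omega⟩ ⟨by omega, by omega⟩ (by omega)
      · exact quad_mem ⟨by omega, by omega⟩ ⟨by omega, by omega⟩ (by omega)

theorem comm_mem' {J : Set ℤ} (hJ : J.OrdConnected) {x y : ℤ} (hx : x ∈ J) (hy : y ∈ J) :
    e x * e y - e y * e x ∈ quadSpan J (x + y) := by
  have aux : ∀ x y : ℤ, x ∈ J → y ∈ J → y ≤ x → e x * e y - e y * e x ∈ quadSpan J (x + y) := by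
    intro x y hx hy h
    have h1 := comm_mem (x - y).toNat x y (by omega)
    refine Submodule.span_mono ?_ h1
    rintro z ⟨c, d, hc, hd, h, rfl⟩
    exact ⟨c, d, hJ.out hy hx hc, hJ.out hy hx hd, h, rfl⟩
  rcases le_total y x with h | h
  · exact aux x y hx hy h
  · have := u_sub_swap_mem (aux y x hy hx h)
    rwa [add_comm] at this

def mon (l : List ℤ) : U := (l.map e).prod

theorem mon_cons (x : ℤ) (l : List ℤ) : mon (x :: l) = e x * mon l := by simp [mon]
theorem mon_append (l l' : List ℤ) : mon (l ++ l') = mon l * mon l' := by simp [mon]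

def lowSpan (J : Set ℤ) (k : ℕ) (s : ℤ) : Submodule R U :=
  Submodule.span R {x | ∃ v : List ℤ, v.length = k ∧ v.sum < s ∧ (∀ x ∈ v, x ∈ J) ∧ x = mon v}

theorem e_mul_low {J : Set ℤ} {k : ℕ} {s x : ℤ} (hx : x ∈ J) {u : U} (hu : u ∈ lowSpan J k s) :
    e x * u ∈ lowSpan J (k + 1) (x + s) := by
  induction hu using Submodule.span_induction with
  | mem u h =>
    obtain ⟨v, h1, h2, h3, rfl⟩ := h
    refine Submodule.subset_span ⟨x :: v, by simp [h1], by simp [h2], ?_, (mon_cons _ _).symm⟩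
    intro y hy
    rcases List.mem_cons.mp hy with rfl | hy
    · exact hx
    · exact h3 y hy
  | zero => simp
  | add a b _ _ ha hb => rw [mul_add]; exact Submodule.add_mem _ ha hb
  | smul r a _ ha => rw [mul_smul_comm]; exact Submodule.smul_mem _ _ ha

theorem quad_mul_low {J : Set ℤ} {s : ℤ} {l : List ℤ} (hl : ∀ x ∈ l, x ∈ J) {u : U}
    (hu : u ∈ quadSpan J s) :
    u * mon l ∈ lowSpan J (l.length + 2) (s + l.sum) := by
  induction hu using Submodule.span_induction with
  | mem u h =>
    obtain ⟨c, d, h1, h2, h3, rfl⟩ := h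
    refine Submodule.subset_span ⟨c :: d :: l, by simp, by simp; omega, ?_, ?_⟩
    · intro y hy
      simp only [List.mem_cons] at hy
      rcases hy with rfl | rfl | hy
      · exact h1
      · exact h2
      · exact hl y hy
    · simp [mon_cons, mul_assoc]
  | zero => simp
  | add a b _ _ ha hb => rw [add_mul]; exact Submodule.add_mem _ ha hb
  | smul r a _ ha => rw [smul_mul_assoc]; exact Submodule.smul_mem _ _ ha

theorem perm_low {J : Set ℤ} (hJ : J.OrdConnected) {l l' : List ℤ} (h : l.Perm l') :
    (∀ x ∈ l, x ∈ J) → mon l - mon l' ∈ lowSpan J l.length l.sum := by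
  induction h with
  | nil => intro _; rw [u_sub_self]; exact Submodule.zero_mem _
  | cons x h ih =>
    intro hl
    rw [mon_cons, mon_cons, ← u_mul_sub, List.length_cons, List.sum_cons]
    exact e_mul_low (hl x (by simp)) (ih fun y hy => hl y (by simp [hy]))
  | swap x y l =>
    intro hl
    have h1 := comm_mem' hJ (hl y (by simp)) (hl x (by simp))
    have h2 := quad_mul_low (l := l) (fun z hz => hl z (by simp [hz])) h1
    have h3 : mon (y :: x :: l) - mon (x :: y :: l) = (e y * e x - e x * e y) * mon l := by
      simp only [mon_cons, u_sub_mul, mul_assoc]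
    rw [h3]
    simpa [add_assoc] using h2
  | trans h1 h2 ih1 ih2 =>
    intro hl
    have := Submodule.add_mem _ (ih1 hl)
      (by rw [h1.length_eq, h1.sum_eq]; exact ih2 fun x hx => hl x (h1.mem_iff.mpr hx))
    rwa [u_sub_add_sub] at this

def sortedSpan (J : Set ℤ) : Submodule R U :=
  Submodule.span R {x | ∃ v : List ℤ, v.Pairwise (· ≥ ·) ∧ (∀ x ∈ v, x ∈ J) ∧ x = mon v}

theorem sum_lower (lo : ℤ) (l : List ℤ) (h : ∀ x ∈ l, lo ≤ x) : 0 ≤ l.sum - l.length * lo := by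
  induction l with
  | nil => simp
  | cons a l ih =>
    have h1 := ih fun x hx => h x (by simp [hx])
    have h2 := h a (by simp)
    simp only [List.sum_cons, List.length_cons]; push_cast; linarith

theorem straighten_aux {J : Set ℤ} (hJ : J.OrdConnected) (lo : ℤ) (hlo : ∀ x ∈ J, lo ≤ x) (N : ℕ) :
    ∀ l : List ℤ, (∀ x ∈ l, x ∈ J) → l.sum - l.length * lo = N → mon l ∈ sortedSpan J := by
  induction N using Nat.strong_induction_on with
  | _ N ih =>
    intro l hl hN
    have hp : (l.insertionSort (· ≥ ·)).Perm l := List.perm_insertionSort _ l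
    have h1 := perm_low hJ hp.symm hl
    have h2 : lowSpan J l.length l.sum ≤ sortedSpan J := by
      apply Submodule.span_le.mpr
      rintro _ ⟨v, hv1, hv2, hv3, rfl⟩
      have h0 := sum_lower lo v fun x hx => hlo x (hv3 x hx)
      refine ih (v.sum - v.length * lo).toNat ?_ v hv3 (by omega)
      rw [hv1] at h0 ⊢
      omega
    have h3 : mon (l.insertionSort (· ≥ ·)) ∈ sortedSpan J :=
      Submodule.subset_span ⟨_, List.pairwise_insertionSort _ l,
        fun x hx => hl x (hp.mem_iff.mp hx), rfl⟩
    have := Submodule.add_mem _ (h2 h1) h3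
    rwa [u_sub_add_cancel] at this

theorem straighten {J : Set ℤ} (hJ : J.OrdConnected) (l : List ℤ) (hl : ∀ x ∈ l, x ∈ J) :
    mon l ∈ sortedSpan J := by
  obtain ⟨lo, hlo⟩ : ∃ lo : ℤ, ∀ x ∈ l, lo ≤ x := by
    obtain ⟨b, hb⟩ := l.toFinset.bddBelow
    exact ⟨b, fun x hx => hb (by simpa using hx)⟩
  have hJ' : (J ∩ Set.Ici lo).OrdConnected := hJ.inter Set.ordConnected_Ici
  have hl' : ∀ x ∈ l, x ∈ J ∩ Set.Ici lo := fun x hx => ⟨hl x hx, hlo x hx⟩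
  have h := straighten_aux hJ' lo (fun x hx => hx.2) (l.sum - l.length * lo).toNat l hl'
    (by have := sum_lower lo l hlo; omega)
  refine Submodule.span_mono ?_ h
  rintro _ ⟨v, h1, h2, rfl⟩
  exact ⟨v, h1, fun x hx => (h2 x hx).1, rfl⟩

theorem adjoin_le_sorted {J : Set ℤ} (hJ : J.OrdConnected) :
    Subalgebra.toSubmodule (Algebra.adjoin R (e '' J)) = sortedSpan J := by
  apply le_antisymm
  · rw [Algebra.adjoin_eq_span]
    apply Submodule.span_le.mpr
    intro x hx
    have : ∃ l : List ℤ, (∀ x ∈ l, x ∈ J) ∧ x = mon l := by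
      induction hx using Submonoid.closure_induction with
      | mem x h =>
        obtain ⟨n, hn, rfl⟩ := h
        exact ⟨[n], by simpa using hn, by simp [mon]⟩
      | one => exact ⟨[], by simp, by simp [mon]⟩
      | mul x y _ _ hx hy =>
        obtain ⟨l, hl, rfl⟩ := hx
        obtain ⟨l', hl', rfl⟩ := hy
        refine ⟨l ++ l', ?_, (mon_append _ _).symm⟩
        intro z hz
        rcases List.mem_append.mp hz with h | h
        · exact hl z h
        · exact hl' z h
    obtain ⟨l, hl, rfl⟩ := this
    exact straighten hJ l hl
  · apply Submodule.span_le.mpr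
    rintro _ ⟨v, -, hv, rfl⟩
    apply Subalgebra.list_prod_mem
    intro x hx
    obtain ⟨n, hn, rfl⟩ := List.mem_map.mp hx
    exact Algebra.subset_adjoin ⟨n, hv n hn, rfl⟩

theorem Uge_eq : Subalgebra.toSubmodule Uge = sortedSpan (Set.Ici 0) := by
  rw [← adjoin_le_sorted Set.ordConnected_Ici, Uge]
  congr 2
  ext x
  constructor
  · rintro ⟨n, rfl⟩; exact ⟨n, by simp, rfl⟩
  · rintro ⟨n, hn, rfl⟩; exact ⟨n.toNat, by simp [Int.toNat_of_nonneg hn]⟩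

theorem Ult_eq : Subalgebra.toSubmodule Ult = sortedSpan (Set.Iio 0) := by
  rw [← adjoin_le_sorted Set.ordConnected_Iio, Ult]
  congr 2
  ext x
  constructor
  · rintro ⟨n, hn, rfl⟩; exact ⟨n, hn, rfl⟩
  · rintro ⟨n, hn, rfl⟩; exact ⟨n, hn, rfl⟩

theorem adjoin_top : Algebra.adjoin R (e '' Set.univ) = ⊤ := by
  rw [eq_top_iff]
  intro x _
  obtain ⟨y, rfl⟩ := RingQuot.mkAlgHom_surjective R ERel x
  induction y using FreeAlgebra.induction with
  | grade0 r => rw [AlgHom.commutes]; exact Subalgebra.algebraMap_mem _ r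
  | grade1 n => exact Algebra.subset_adjoin ⟨n, trivial, rfl⟩
  | mul a b ha hb => rw [map_mul]; exact Subalgebra.mul_mem _ (ha trivial) (hb trivial)
  | add a b ha hb => rw [map_add]; exact Subalgebra.add_mem _ (ha trivial) (hb trivial)

theorem sorted_top : sortedSpan Set.univ = ⊤ := by
  rw [← adjoin_le_sorted Set.ordConnected_univ, adjoin_top]; rfl

/-- shuffle kernel -/
def om (z w : ℂˣ) : R := 1 + hbar * PowerSeries.C (((z : ℂ) - w)⁻¹)

def pw (z : ℂˣ) (n : ℤ) : R := PowerSeries.C ((z ^ n : ℂˣ) : ℂ)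

theorem pw_succ (z : ℂˣ) (n : ℤ) : pw z (n + 1) = PowerSeries.C (z : ℂ) * pw z n := by
  rw [pw, pw, ← map_mul, zpow_add, zpow_one, mul_comm, Units.val_mul]

abbrev MM : Type := Finset ℂˣ → R

def Eop (n : ℤ) : Module.End R MM where
  toFun F S := ∑ z ∈ S, pw z n * ((∏ w ∈ S.erase z, om z w) * F (S.erase z))
  map_add' F G := by
    funext S
    simp only [Pi.add_apply, mul_add, Finset.sum_add_distrib]
  map_smul' r F := by
    funext S
    simp only [Pi.smul_apply, smul_eq_mul, RingHom.id_apply, Finset.mul_sum]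
    refine Finset.sum_congr rfl fun z _ => ?_
    ring

theorem Eop_apply (n : ℤ) (F : MM) (S : Finset ℂˣ) :
    Eop n F S = ∑ z ∈ S, pw z n * ((∏ w ∈ S.erase z, om z w) * F (S.erase z)) := rfl

def GG (F : MM) (S : Finset ℂˣ) (z w : ℂˣ) : R :=
  (∏ u ∈ (S.erase z).erase w, om z u) * (∏ u ∈ (S.erase z).erase w, om w u) *
    F ((S.erase z).erase w)

theorem GG_symm (F : MM) (S : Finset ℂˣ) (z w : ℂˣ) : GG F S z w = GG F S w z := by
  rw [GG, GG, Finset.erase_right_comm]; ring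

theorem Eop_apply2 (m n : ℤ) (F : MM) (S : Finset ℂˣ) :
    (Eop m * Eop n) F S =
      ∑ z ∈ S, ∑ w ∈ S.erase z, pw z m * pw w n * om z w * GG F S z w := by
  rw [Module.End.mul_apply, Eop_apply]
  refine Finset.sum_congr rfl fun z _ => ?_
  rw [Eop_apply, Finset.mul_sum, Finset.mul_sum]
  refine Finset.sum_congr rfl fun w hw => ?_
  rw [← Finset.mul_prod_erase _ _ hw, GG]
  ring

theorem sum_swap (S : Finset ℂˣ) (A : ℂˣ → ℂˣ → R) :
    ∑ z ∈ S, ∑ w ∈ S.erase z, A z w = ∑ z ∈ S, ∑ w ∈ S.erase z, A w z := by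
  apply Finset.sum_comm'
  intro x y
  simp only [Finset.mem_erase]
  tauto

theorem om_rel {z w : ℂˣ} (h : w ≠ z) :
    (PowerSeries.C (z : ℂ) - PowerSeries.C (w : ℂ) - hbar) * om z w
     + (PowerSeries.C (w : ℂ) - PowerSeries.C (z : ℂ) - hbar) * om w z = 0 := by
  have hne : (z : ℂ) - w ≠ 0 := sub_ne_zero.mpr fun h' => h (Units.ext h'.symm)
  have h1 : ((w : ℂ) - z)⁻¹ = - ((z : ℂ) - w)⁻¹ := by rw [← inv_neg, neg_sub]
  have h2 : (PowerSeries.C (z : ℂ) - PowerSeries.C (w : ℂ)) * PowerSeries.C (((z : ℂ) - w)⁻¹) =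
      (1 : R) := by
    rw [← map_sub, ← map_mul, mul_inv_cancel₀ hne, map_one]
  rw [om, om, h1, map_neg]
  linear_combination (2 * hbar) * h2

theorem Eop_rel (m n : ℤ) :
    Eop (m + 1) * Eop n - Eop n * Eop (m + 1) - Eop m * Eop (n + 1) + Eop (n + 1) * Eop m
    = hbar • (Eop m * Eop n + Eop n * Eop m) := by
  rw [← sub_eq_zero]
  apply LinearMap.ext
  intro F
  funext S
  simp only [LinearMap.sub_apply, LinearMap.add_apply, LinearMap.smul_apply, Pi.sub_apply,
    Pi.add_apply, Pi.smul_apply, Eop_apply2, smul_eq_mul, LinearMap.zero_apply, Pi.zero_apply,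
    ← Finset.sum_add_distrib, ← Finset.sum_sub_distrib, Finset.mul_sum]
  have h1 : ∑ z ∈ S, ∑ w ∈ S.erase z,
      (pw z m * pw w n * ((PowerSeries.C (z : ℂ) - PowerSeries.C (w : ℂ) - hbar) * om z w) *
        GG F S z w + pw w m * pw z n *
        ((PowerSeries.C (z : ℂ) - PowerSeries.C (w : ℂ) - hbar) * om z w) * GG F S z w) = 0 := by
    simp only [Finset.sum_add_distrib]
    rw [sum_swap S (fun z w => pw w m * pw z n *
        ((PowerSeries.C (z : ℂ) - PowerSeries.C (w : ℂ) - hbar) * om z w) * GG F S z w)]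
    simp only [← Finset.sum_add_distrib]
    refine Finset.sum_eq_zero fun z _ => Finset.sum_eq_zero fun w hw => ?_
    have h := om_rel (Finset.ne_of_mem_erase hw)
    rw [GG_symm F S w z]
    linear_combination (pw z m * pw w n * GG F S z w) * h
  rw [← h1]
  refine Finset.sum_congr rfl fun z _ => Finset.sum_congr rfl fun w _ => ?_
  simp only [pw_succ]
  ring

def rho : U →ₐ[R] Module.End R MM :=
  RingQuot.liftAlgHom R ⟨FreeAlgebra.lift R Eop, by
    rintro _ _ ⟨m, n⟩
    simpa only [map_add, map_sub, map_mul, map_smul, E, FreeAlgebra.lift_ι_apply] using Eop_rel m n⟩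

theorem rho_e (n : ℤ) : rho (e n) = Eop n := by
  simp [rho, e, E]

def vac : MM := fun S => if S = ∅ then 1 else 0

def ev : U →ₗ[R] MM := (LinearMap.applyₗ vac).comp rho.toLinearMap

theorem ev_apply (u : U) : ev u = rho u vac := rfl

theorem om_const (z w : ℂˣ) : PowerSeries.constantCoeff (om z w) = 1 := by
  simp [om, hbar]

theorem ev_mon (l : List ℤ) : ∀ S, PowerSeries.constantCoeff (ev (mon l) S) =
    MvPolynomial.constantCoeff (QQ S (l.map X).prod) := by
  induction l with
  | nil =>
    intro S
    simp only [mon, ev_apply, List.map_nil, List.prod_nil, map_one, QQ_one, Module.End.one_apply,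
      vac]
    split_ifs <;> simp
  | cons n l ih =>
    intro S
    rw [mon_cons, ev_apply, map_mul, Module.End.mul_apply, rho_e, ← ev_apply, Eop_apply,
      List.map_cons, List.prod_cons, QQ_X_mul, map_sum, map_add, map_sum]
    simp only [map_mul, map_prod, om_const, ih, MvPolynomial.smul_eq_C_mul, pw]
    simp

abbrev WW : Type := {l : List ℤ // l.Pairwise (· ≥ ·)}

theorem prod_X (l : List ℤ) : (l.map (X : ℤ → MvPolynomial ℤ ℂ)).prod =
    monomial (Multiset.toFinsupp (l : Multiset ℤ)) 1 := by
  induction l with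
  | nil => simp
  | cons a l ih =>
    rw [List.map_cons, List.prod_cons, ih, ← Multiset.cons_coe, ← Multiset.singleton_add, map_add,
      Multiset.toFinsupp_singleton, X, monomial_mul, one_mul]

theorem WW_inj (l l' : WW) (h : Multiset.toFinsupp (l.1 : Multiset ℤ) = Multiset.toFinsupp (l'.1 : Multiset ℤ)) :
    l = l' := by
  have h1 : (l.1 : Multiset ℤ) = l'.1 := Multiset.toFinsupp.injective h
  exact Subtype.ext ((Multiset.coe_eq_coe.mp h1).eq_of_pairwise' l.2 l'.2)

def lc : (WW →₀ R) →ₗ[R] MM := Finsupp.linearCombination R (fun l : WW => ev (mon l.1))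

theorem lc_const (c : WW →₀ R) (h : lc c = 0) (l : WW) : PowerSeries.constantCoeff (c l) = 0 := by
  set P : MvPolynomial ℤ ℂ :=
    ∑ l ∈ c.support, PowerSeries.constantCoeff (c l) • (l.1.map X).prod with hP
  have h1 : ∀ S, MvPolynomial.constantCoeff (QQ S P) = 0 := by
    intro S
    have h2 := congrArg PowerSeries.constantCoeff (congrFun h S)
    rw [lc, Finsupp.linearCombination_apply, Finsupp.sum, Finset.sum_apply, map_sum] at h2
    rw [hP, QQ_sum, map_sum]
    simp only [Pi.smul_apply, smul_eq_mul, map_mul, ev_mon, Pi.zero_apply, map_zero] at h2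
    simpa [MvPolynomial.smul_eq_C_mul] using h2
  have h3 := QQ_inj (l.1 : Multiset ℤ) P h1
  by_cases hl : l ∈ c.support
  · rw [hP, coeff_sum, Finset.sum_eq_single l] at h3
    · simpa [prod_X] using h3
    · intro l' _ hne
      rw [prod_X, coeff_smul, coeff_monomial, if_neg fun h => hne (WW_inj _ _ h), smul_zero]
    · intro h; exact absurd hl h
  · rw [Finsupp.notMem_support_iff.mp hl, map_zero]

def shift (p : R) : R := PowerSeries.mk fun n => PowerSeries.coeff (n + 1) p

theorem lc_coeff (n : ℕ) : ∀ c : WW →₀ R, lc c = 0 → ∀ l, PowerSeries.coeff n (c l) = 0 := by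
  induction n with
  | zero => intro c h l; simpa using lc_const c h l
  | succ n ih =>
    intro c h l
    set c' : WW →₀ R := c.mapRange shift (by ext; simp [shift]) with hc'
    have hcc : c = (PowerSeries.X : R) • c' := by
      ext1 l
      rw [Finsupp.smul_apply, hc', Finsupp.mapRange_apply, smul_eq_mul]
      ext k
      cases k with
      | zero => simpa using lc_const c h l
      | succ k => rw [PowerSeries.coeff_succ_X_mul, shift, PowerSeries.coeff_mk]
    have h' : lc c' = 0 := by
      rw [hcc, map_smul] at h
      funext S
      have := congrFun h S
      simp only [Pi.smul_apply, smul_eq_mul, Pi.zero_apply, mul_eq_zero] at this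
      exact this.resolve_left PowerSeries.X_ne_zero
    have := ih c' h' l
    simpa [hc', shift] using this

theorem mon_indep : LinearIndependent R (fun l : WW => mon l.1) := by
  have h : LinearIndependent R (ev ∘ fun l : WW => mon l.1) := by
    rw [linearIndependent_iff]
    intro c hc
    ext l n
    simpa using lc_coeff n c hc l
  exact h.of_comp

abbrev WJ (J : Set ℤ) : Type := {l : WW // ∀ x ∈ l.1, x ∈ J}

theorem mon_mem {J : Set ℤ} (l : WJ J) : mon l.1.1 ∈ sortedSpan J :=
  Submodule.subset_span ⟨_, l.1.2, l.2, rfl⟩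

theorem append_sorted (a : WJ (Set.Ici 0)) (b : WJ (Set.Iio 0)) :
    (a.1.1 ++ b.1.1).Pairwise (· ≥ ·) := by
  rw [List.pairwise_append]
  refine ⟨a.1.2, b.1.2, fun x hx y hy => ?_⟩
  have h1 : 0 ≤ x := a.2 x hx
  have h2 : y < 0 := b.2 y hy
  omega

def app (p : WJ (Set.Ici 0) × WJ (Set.Iio 0)) : WW := ⟨p.1.1.1 ++ p.2.1.1, append_sorted _ _⟩

theorem filter_app (p : WJ (Set.Ici 0) × WJ (Set.Iio 0)) :
    (app p).1.filter (fun x => 0 ≤ x) = p.1.1.1 ∧ (app p).1.filter (fun x => x < 0) = p.2.1.1 := by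
  have h1 : ∀ x ∈ p.1.1.1, 0 ≤ x := p.1.2
  have h2 : ∀ x ∈ p.2.1.1, x < 0 := p.2.2
  constructor
  · rw [app, List.filter_append, List.filter_eq_self.mpr, List.filter_eq_nil_iff.mpr, List.append_nil]
    · intro x hx; simpa using h2 x hx
    · intro x hx; simpa using h1 x hx
  · rw [app, List.filter_append, List.filter_eq_nil_iff.mpr, List.filter_eq_self.mpr, List.nil_append]
    · intro x hx; simpa using h2 x hx
    · intro x hx; simpa using h1 x hx

theorem app_inj : Function.Injective app := by
  intro p q h
  have hp := filter_app p
  have hq := filter_app q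
  rw [h] at hp
  refine Prod.ext (Subtype.ext (Subtype.ext ?_)) (Subtype.ext (Subtype.ext ?_))
  · exact hp.1.symm.trans hq.1
  · exact hp.2.symm.trans hq.2

theorem split_sorted (l : List ℤ) (h : l.Pairwise (· ≥ ·)) :
    l = l.filter (fun x => 0 ≤ x) ++ l.filter (fun x => x < 0) := by
  induction l with
  | nil => rfl
  | cons a l ih =>
    rw [List.pairwise_cons] at h
    by_cases ha : 0 ≤ a
    · rw [List.filter_cons_of_pos (by simpa using ha), List.filter_cons_of_neg (by simpa using ha),
        List.cons_append, ← ih h.2]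
    · have h1 : l.filter (fun x => 0 ≤ x) = [] := by
        rw [List.filter_eq_nil_iff]
        intro x hx
        have := h.1 x hx
        simp only [decide_eq_true_eq]
        omega
      have h2 := ih h.2
      rw [h1, List.nil_append] at h2
      rw [List.filter_cons_of_neg (by simpa using ha), List.filter_cons_of_pos (by simpa using ha),
        h1, ← h2, List.nil_append]

theorem span_WJ (J : Set ℤ) :
    Submodule.span R (Set.range fun l : WJ J => (⟨mon l.1.1, mon_mem l⟩ : sortedSpan J)) = ⊤ := by
  have h1 : (Set.range fun l : WJ J => (⟨mon l.1.1, mon_mem l⟩ : sortedSpan J)) =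
      ((↑) : sortedSpan J → U) ⁻¹'
        {x | ∃ v : List ℤ, v.Pairwise (· ≥ ·) ∧ (∀ x ∈ v, x ∈ J) ∧ x = mon v} := by
    ext ⟨x, hx⟩
    constructor
    · rintro ⟨l, hl⟩
      exact ⟨l.1.1, l.1.2, l.2, (congrArg Subtype.val hl).symm⟩
    · rintro ⟨v, h1, h2, h3⟩
      exact ⟨⟨⟨v, h1⟩, h2⟩, Subtype.ext h3.symm⟩
  rw [h1]
  exact Submodule.span_span_coe_preimage

theorem bij_aux : Function.Bijective
    (Submodule.mulMap (sortedSpan (Set.Ici 0)) (sortedSpan (Set.Iio 0))) := by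
  constructor
  · set f : (WJ (Set.Ici 0) × WJ (Set.Iio 0) →₀ R) →ₗ[R]
        (sortedSpan (Set.Ici 0) ⊗[R] sortedSpan (Set.Iio 0)) :=
      Finsupp.linearCombination R fun p =>
        (⟨mon p.1.1.1, mon_mem p.1⟩ : sortedSpan (Set.Ici 0)) ⊗ₜ[R]
          (⟨mon p.2.1.1, mon_mem p.2⟩ : sortedSpan (Set.Iio 0)) with hf
    have hsurj : Function.Surjective f := by
      rw [← LinearMap.range_eq_top, hf, Finsupp.range_linearCombination, eq_top_iff,
        ← TensorProduct.map₂_mk_top_top_eq_top, ← span_WJ, ← span_WJ, Submodule.map₂_span_span]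
      apply Submodule.span_mono
      rintro _ ⟨_, ⟨a, rfl⟩, _, ⟨b, rfl⟩, rfl⟩
      exact ⟨(a, b), rfl⟩
    have hinj : Function.Injective ((Submodule.mulMap (sortedSpan (Set.Ici 0))
        (sortedSpan (Set.Iio 0))).comp f) := by
      have h := mon_indep.comp app app_inj
      rw [LinearIndependent] at h
      convert h using 2
      rw [hf]
      apply Finsupp.lhom_ext
      intro p r
      simp [app, mon_append]
    intro x y hxy
    obtain ⟨a, rfl⟩ := hsurj x
    obtain ⟨b, rfl⟩ := hsurj y
    rw [hinj hxy]
  · rw [← LinearMap.range_eq_top, Submodule.mulMap_range, eq_top_iff, ← sorted_top]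
    apply Submodule.span_le.mpr
    rintro _ ⟨v, hv, -, rfl⟩
    rw [split_sorted v hv, mon_append]
    apply Submodule.mul_mem_mul
    · exact Submodule.subset_span ⟨_, hv.filter _, fun x hx => by simpa using (List.mem_filter.mp hx).2, rfl⟩
    · exact Submodule.subset_span ⟨_, hv.filter _, fun x hx => by simpa using (List.mem_filter.mp hx).2, rfl⟩

end Helpers

/-- multiplication induces an isomorphism of `R`-modules
`U^{≥0} ⊗_R U^{<0} → U`. -/
theorem mulMap_ge_lt_bijective :
    Function.Bijective
      (Submodule.mulMap (Subalgebra.toSubmodule Uge) (Subalgebra.toSubmodule Ult)) := by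
  rw [Uge_eq, Ult_eq]
  exact bij_aux

end
end

section
/- Multiplication by ℏ is injective on U: for every x ∈ U, if ℏ·x = 0 then x = 0. (Equivalently, U is a torsion-free, hence flat, ℂ[[ℏ]]-module, as required for U to be a flat deformation.) -/
open scoped TensorProduct

noncomputable section

section abstract_part

variable {A : Type} [Ring A] [Algebra R A] {g : ℤ → A}

def GRel (g : ℤ → A) : Prop := ∀ m n : ℤ, g (m + 1) * g n + g (n + 1) * g m =
  g n * g (m + 1) + g m * g (n + 1) + hbar • (g m * g n + g n * g m)

def EA (g : ℤ → A) (l : List ℤ) : A := (l.map g).prod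

def MA (g : ℤ → A) (lo hi : ℤ) (k : ℕ) : Submodule R A :=
  Submodule.span R {x | ∃ l : List ℤ, l.length = k ∧ (∀ a ∈ l, lo ≤ a ∧ a ≤ hi) ∧ x = EA g l}

theorem EU_mem {lo hi : ℤ} (l : List ℤ) (h : ∀ a ∈ l, lo ≤ a ∧ a ≤ hi) :
    EA g l ∈ MA g lo hi l.length :=
  Submodule.subset_span ⟨l, rfl, h, rfl⟩

theorem ee_mem {lo hi p q : ℤ} (h1 : lo ≤ p) (h2 : p ≤ hi) (h3 : lo ≤ q) (h4 : q ≤ hi) :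
    g p * g q ∈ MA g lo hi 2 := by
  have := EU_mem (g := g) (lo := lo) (hi := hi) [p, q] (by simp; omega)
  simpa [EA] using this

theorem MU_mul {lo hi : ℤ} {k k' : ℕ} {x y : A} (hx : x ∈ MA g lo hi k) (hy : y ∈ MA g lo hi k') :
    x * y ∈ MA g lo hi (k + k') := by
  have h : MA g lo hi k * MA g lo hi k' ≤ MA g lo hi (k + k') := by
    unfold MA
    rw [Submodule.span_mul_span]
    apply Submodule.span_mono
    rintro _ ⟨_, ⟨l, hl, hl', rfl⟩, _, ⟨l', hm, hm', rfl⟩, rfl⟩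
    refine ⟨l ++ l', by simp [hl, hm], ?_, by simp [EA]⟩
    intro a ha
    rcases List.mem_append.1 ha with ha | ha
    · exact hl' a ha
    · exact hm' a ha
  exact h (Submodule.mul_mem_mul hx hy)

theorem comm_aux (hg : GRel g) (lo hi : ℤ) (k : ℕ) : ∀ q : ℤ, lo ≤ q → q + k ≤ hi →
    ∃ y ∈ MA g lo hi 2, g (q + k) * g q - g q * g (q + k) = hbar • y := by
  induction k using Nat.strong_induction_on with
  | _ k ih =>
    intro q h1 h2
    match k, ih, h2 with
    | 0, _, _ => exact ⟨0, Submodule.zero_mem _, by simp⟩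
    | 1, _, h2 =>
      refine ⟨g q * g q, ee_mem h1 (by push_cast at h2; omega) h1 (by push_cast at h2; omega), ?_⟩
      have h := hg q q
      have h' : (2 : R) • (g (q + 1) * g q - g q * g (q + 1)) = (2 : R) • (hbar • (g q * g q)) := by
        rw [two_smul, two_smul]
        simp only [smul_add] at h ⊢
        rw [← sub_eq_zero] at h ⊢
        rw [← h]; abel
      have h2 : (PowerSeries.C (1 / 2 : ℂ) : R) * 2 = 1 := by
        rw [show (2 : R) = PowerSeries.C (2 : ℂ) from (map_ofNat _ 2).symm, ← map_mul]; norm_num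
      have h3 := congrArg (fun t => (PowerSeries.C (1 / 2 : ℂ) : R) • t) h'
      simp only [smul_smul (PowerSeries.C (1 / 2 : ℂ) : R) 2, h2, one_smul] at h3
      exact_mod_cast h3
    | k + 2, ih, h2 =>
      push_cast at h2
      obtain ⟨y, hy, hyy⟩ := ih k (by omega) (q + 1) (by omega) (by omega)
      refine ⟨y + (g (q + k + 1) * g q + g q * g (q + k + 1)), ?_, ?_⟩
      · refine Submodule.add_mem _ hy (Submodule.add_mem _ (ee_mem ?_ ?_ ?_ ?_) (ee_mem ?_ ?_ ?_ ?_)) <;> omega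
      · have h := hg (q + k + 1) q
        rw [smul_add, ← hyy]
        have e1 : q + ((k + 2 : ℕ) : ℤ) = q + k + 1 + 1 := by push_cast; ring
        have e2 : q + 1 + (k : ℤ) = q + k + 1 := by ring
        rw [e1, e2]
        simp only [smul_add] at h ⊢
        rw [← sub_eq_zero] at h ⊢
        rw [← h]; abel

theorem comm_mem_s4 (hg : GRel g) (lo hi p q : ℤ) (h1 : lo ≤ p) (h2 : p ≤ hi) (h3 : lo ≤ q) (h4 : q ≤ hi) :
    ∃ y ∈ MA g lo hi 2, g p * g q - g q * g p = hbar • y := by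
  rcases le_total q p with h | h
  · obtain ⟨k, hk⟩ := Int.eq_ofNat_of_zero_le (sub_nonneg.2 h)
    obtain rfl : p = q + k := by omega
    exact comm_aux hg lo hi k q h3 h2
  · obtain ⟨k, hk⟩ := Int.eq_ofNat_of_zero_le (sub_nonneg.2 h)
    obtain rfl : q = p + k := by omega
    obtain ⟨y, hy, hyy⟩ := comm_aux hg lo hi k p h1 h4
    exact ⟨-y, Submodule.neg_mem _ hy, by rw [smul_neg, ← hyy]; abel⟩

theorem perm_mem (hg : GRel g) (lo hi : ℤ) {l l' : List ℤ} (hp : l.Perm l') :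
    (∀ a ∈ l, lo ≤ a ∧ a ≤ hi) → ∃ y ∈ MA g lo hi l.length, EA g l - EA g l' = hbar • y := by
  induction hp with
  | nil => intro _; exact ⟨0, Submodule.zero_mem _, by simp⟩
  | @cons x l₁ l₂ _ ih =>
    intro h
    obtain ⟨y, hy, hyy⟩ := ih (fun a ha => h a (List.mem_cons_of_mem _ ha))
    refine ⟨g x * y, ?_, ?_⟩
    · have hx : g x ∈ MA g lo hi 1 := by
        have := EU_mem (g := g) (lo := lo) (hi := hi) [x] (by simpa using h x (by simp))
        simpa [EA] using this
      have := MU_mul hx hy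
      rwa [add_comm] at this
    · have : EA g (x :: l₁) - EA g (x :: l₂) = g x * (EA g l₁ - EA g l₂) := by
        simp [EA, mul_sub]
      rw [this, hyy, mul_smul_comm]
  | swap x y l =>
    intro h
    have hx := h x (by simp)
    have hy := h y (by simp)
    obtain ⟨w, hw, hww⟩ := comm_mem_s4 hg lo hi y x hy.1 hy.2 hx.1 hx.2
    refine ⟨w * EA g l, ?_, ?_⟩
    · have := MU_mul hw (EU_mem (g := g) (lo := lo) (hi := hi) l (fun a ha => h a (by simp [ha])))
      rw [add_comm] at this
      simpa using this
    · have : EA g (y :: x :: l) - EA g (x :: y :: l) = (g y * g x - g x * g y) * EA g l := by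
        simp [EA, sub_mul, mul_assoc]
      rw [this, hww, smul_mul_assoc]
  | @trans l₁ l₂ l₃ h12 h23 ih1 ih2 =>
    intro h
    obtain ⟨y, hy, hyy⟩ := ih1 h
    obtain ⟨y', hy', hyy'⟩ := ih2 (fun a ha => h a (h12.mem_iff.2 ha))
    rw [← h12.length_eq] at hy'
    exact ⟨y + y', Submodule.add_mem _ hy hy', by rw [smul_add, ← hyy, ← hyy']; abel⟩

def SA (g : ℤ → A) : Submodule R A := Submodule.span R (Set.range fun s : Multiset ℤ => EA g (s.sort (· ≤ ·)))

theorem MU_fg (lo hi : ℤ) (k : ℕ) : (MA g lo hi k).FG := by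
  apply Submodule.fg_span
  have : Set.Finite (Set.range fun f : Fin k → Set.Icc lo hi => EA g (List.ofFn fun i => (f i : ℤ))) :=
    Set.finite_range _
  refine this.subset ?_
  rintro _ ⟨l, rfl, hl, rfl⟩
  refine ⟨fun i => ⟨l.get i, hl _ (List.get_mem l i)⟩, ?_⟩
  simp

theorem MU_le (hg : GRel g) (lo hi : ℤ) (k : ℕ) : MA g lo hi k ≤ SA g := by
  refine Submodule.le_of_le_smul_of_le_jacobson_bot (I := Ideal.span {hbar}) (MU_fg lo hi k) ?_ ?_
  · rw [IsLocalRing.jacobson_eq_maximalIdeal ⊥ bot_ne_top, Ideal.span_le, Set.singleton_subset_iff]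
    show hbar ∈ IsLocalRing.maximalIdeal R
    rw [IsLocalRing.mem_maximalIdeal, mem_nonunits_iff, PowerSeries.isUnit_iff_constantCoeff]
    simp [hbar]
  · conv_lhs => unfold MA
    rw [Submodule.span_le]
    rintro _ ⟨l, rfl, hl, rfl⟩
    have hp : l.Perm ((l : Multiset ℤ).sort (· ≤ ·)) := by
      rw [← Multiset.coe_eq_coe, Multiset.sort_eq]
    obtain ⟨y, hy, hyy⟩ := perm_mem hg lo hi hp hl
    rw [sub_eq_iff_eq_add, add_comm] at hyy
    rw [hyy]
    refine Submodule.add_mem_sup (Submodule.subset_span ⟨_, rfl⟩) ?_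
    exact Submodule.smul_mem_smul (Ideal.mem_span_singleton_self _) hy

theorem EU_mem_SU (hg : GRel g) (l : List ℤ) : EA g l ∈ SA g := by
  obtain ⟨lo, hlo⟩ := l.toFinset.bddBelow
  obtain ⟨hi, hhi⟩ := l.toFinset.bddAbove
  refine MU_le hg lo hi l.length (EU_mem l fun a ha => ⟨hlo ?_, hhi ?_⟩) <;> simpa using ha


end abstract_part

def WF (l : List ℤ) : FreeAlgebra R ℤ := (l.map E).prod

theorem WF_append (l l' : List ℤ) : WF (l ++ l') = WF l * WF l' := by simp [WF]

theorem basis_eq (w : FreeMonoid ℤ) : FreeAlgebra.basisFreeMonoid R ℤ w = WF w.toList := by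
  apply (FreeAlgebra.equivMonoidAlgebraFreeMonoid (R := R) (X := ℤ)).injective
  have h1 : FreeAlgebra.equivMonoidAlgebraFreeMonoid (FreeAlgebra.basisFreeMonoid R ℤ w)
     = MonoidAlgebra.of R (FreeMonoid ℤ) w := by
    simp [FreeAlgebra.basisFreeMonoid]
  rw [h1]
  clear h1
  induction w using FreeMonoid.recOn with
  | one => simp [WF]; rfl
  | of_mul x xs ih =>
    rw [map_mul, ih]
    simp only [WF, FreeMonoid.toList_of_mul, List.map_cons, List.prod_cons, map_mul]
    congr 1
    simp [E, FreeAlgebra.equivMonoidAlgebraFreeMonoid]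

theorem WF_span : Submodule.span R (Set.range WF) = ⊤ := by
  rw [← (FreeAlgebra.basisFreeMonoid R ℤ).span_eq]
  congr 1
  ext x
  constructor
  · rintro ⟨l, rfl⟩; exact ⟨FreeMonoid.ofList l, basis_eq _⟩
  · rintro ⟨l, rfl⟩; exact ⟨l.toList, (basis_eq _).symm⟩


instance ringU : Ring U := Algebra.semiringToRing R

theorem e_rel_s4 : GRel e := by
  intro m n
  have h := RingQuot.mkAlgHom_rel R (ERel.current m n)
  have h2 := congrArg (fun t => t + RingQuot.mkAlgHom R ERel (E n * E (m + 1) + E m * E (n + 1))) h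
  simp only [← map_add] at h2
  rw [show E (m + 1) * E n - E n * E (m + 1) - E m * E (n + 1) + E (n + 1) * E m +
    (E n * E (m + 1) + E m * E (n + 1)) = E (m + 1) * E n + E (n + 1) * E m by abel] at h2
  simp only [map_add, map_mul, map_smul] at h2
  rw [add_comm (hbar • _)] at h2
  exact h2

theorem mk_WF (l : List ℤ) : RingQuot.mkAlgHom R ERel (WF l) = EA e l := by
  simp only [WF, EA, map_list_prod, List.map_map]; rfl

theorem SU_top (x : U) : x ∈ SA e := by
  obtain ⟨y, rfl⟩ := RingQuot.mkAlgHom_surjective R ERel x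
  have hy : y ∈ Submodule.span R (Set.range WF) := by rw [WF_span]; trivial
  induction hy using Submodule.span_induction with
  | mem x h => obtain ⟨l, rfl⟩ := h; rw [mk_WF]; exact EU_mem_SU e_rel_s4 l
  | zero => simp
  | add x y _ _ hx hy => rw [map_add]; exact Submodule.add_mem _ hx hy
  | smul a x _ hx => rw [map_smul]; exact Submodule.smul_mem _ _ hx

def prodP {k : ℕ} (y : Fin k → R) : R := ∏ i, ∏ j ∈ Finset.Ioi i, (y i - y j + hbar)

def phi (k : ℕ) (z : Fin k → ℂ) (l : List ℤ) : R :=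
  if l.length = k then
    ∑ σ : Equiv.Perm (Fin k), ((Equiv.Perm.sign σ : ℤ) : R) *
      ((∏ i : Fin k, (PowerSeries.C (z (σ i) ^ (l.getD i 0)) : R)) *
        prodP (fun i => PowerSeries.C (z (σ i))))
  else 0

theorem prodP_swap {k : ℕ} (i j : Fin k) (hij : (j : ℕ) = i + 1) :
    ∃ Q : (Fin k → R) → R, (∀ y, prodP y = (y i - y j + hbar) * Q y) ∧
      ∀ y, Q (y ∘ Equiv.swap i j) = Q y := by
  classical
  let S : Finset ((_ : Fin k) × Fin k) := (Finset.univ.sigma fun i => Finset.Ioi i)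
  refine ⟨fun y => ∏ p ∈ S.erase ⟨i, j⟩, (y p.1 - y p.2 + hbar), ?_, ?_⟩
  · intro y
    have hm : (⟨i, j⟩ : (_ : Fin k) × Fin k) ∈ S := by
      simp only [S, Finset.mem_sigma, Finset.mem_univ, Finset.mem_Ioi, true_and, Fin.lt_def]
      omega
    rw [Finset.mul_prod_erase S (fun p => y p.1 - y p.2 + hbar) hm]
    unfold prodP
    rw [Finset.prod_sigma']
  · intro y
    have key : ∀ p ∈ S.erase ⟨i, j⟩,
        (⟨Equiv.swap i j p.1, Equiv.swap i j p.2⟩ : (_ : Fin k) × Fin k) ∈ S.erase ⟨i, j⟩ := by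
      rintro ⟨a, b⟩ hp
      simp only [S, Finset.mem_erase, Finset.mem_sigma, Finset.mem_univ, Finset.mem_Ioi, true_and,
        ne_eq, Sigma.mk.injEq, heq_eq_eq, Fin.lt_def, Fin.ext_iff] at hp ⊢
      simp only [Equiv.swap_apply_def, Fin.ext_iff]
      split_ifs <;> omega
    refine Finset.prod_nbij' (fun p => ⟨Equiv.swap i j p.1, Equiv.swap i j p.2⟩)
      (fun p => ⟨Equiv.swap i j p.1, Equiv.swap i j p.2⟩) key key ?_ ?_ ?_
    · rintro ⟨a, b⟩ _; simp
    · rintro ⟨a, b⟩ _; simp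
    · rintro ⟨a, b⟩ _; simp

theorem getD_ins (u v : List ℤ) (p q : ℤ) (a : ℕ) : (u ++ [p, q] ++ v).getD a 0 =
    if a = u.length then p else if a = u.length + 1 then q else (u ++ [0, 0] ++ v).getD a 0 := by
  split_ifs with h1 h2
  · subst h1; simp
  · subst h2; simp
  · simp only [List.getD_eq_getElem?_getD, List.append_assoc]
    by_cases h : a < u.length
    · simp [List.getElem?_append, h]
    · obtain ⟨b, rfl⟩ : ∃ b, a = u.length + (b + 2) := ⟨a - u.length - 2, by omega⟩
      simp [List.getElem?_append]

theorem phi_ins (u v : List ℤ) (i j : Fin (u.length + 2 + v.length)) (hi : (i : ℕ) = u.length)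
    (hj : (j : ℕ) = u.length + 1) (z : Fin (u.length + 2 + v.length) → ℂ) (p q : ℤ) :
    phi _ z (u ++ [p, q] ++ v) = ∑ σ : Equiv.Perm (Fin (u.length + 2 + v.length)),
      ((Equiv.Perm.sign σ : ℤ) : R) * (PowerSeries.C (z (σ i) ^ p) * PowerSeries.C (z (σ j) ^ q) *
      (∏ a ∈ (Finset.univ.erase i).erase j,
        (PowerSeries.C (z (σ a) ^ ((u ++ [0, 0] ++ v).getD a 0)) : R)) *
        prodP (fun i => PowerSeries.C (z (σ i)))) := by
  classical
  have hne : j ≠ i := by intro h; rw [h] at hj; omega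
  unfold phi
  rw [if_pos (by simp; omega)]
  refine Finset.sum_congr rfl fun σ _ => ?_
  congr 2
  rw [← Finset.mul_prod_erase Finset.univ _ (Finset.mem_univ i),
    ← Finset.mul_prod_erase (Finset.univ.erase i) _ (show j ∈ _ by simp [hne]), ← mul_assoc]
  congr 1
  · congr 3
    · rw [getD_ins, if_pos hi]
    · rw [getD_ins, if_neg (by omega), if_pos hj]
  · refine Finset.prod_congr rfl fun a ha => ?_
    simp only [Finset.mem_erase, Finset.mem_univ, and_true, ne_eq, Fin.ext_iff] at ha
    rw [getD_ins, if_neg (by omega), if_neg (by omega)]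

theorem phi_rel (k : ℕ) (z : Fin k → ℂ) (hz : ∀ i, z i ≠ 0) (u v : List ℤ) (m n : ℤ) :
    phi k z (u ++ [m + 1, n] ++ v) - phi k z (u ++ [n, m + 1] ++ v)
      - phi k z (u ++ [m, n + 1] ++ v) + phi k z (u ++ [n + 1, m] ++ v)
    = hbar * (phi k z (u ++ [m, n] ++ v) + phi k z (u ++ [n, m] ++ v)) := by
  classical
  by_cases hk : u.length + 2 + v.length = k
  swap
  · have : ∀ p q : ℤ, phi k z (u ++ [p, q] ++ v) = 0 := by
      intro p q
      unfold phi
      rw [if_neg]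
      simp; omega
    simp only [this]; simp
  subst hk
  let i : Fin (u.length + 2 + v.length) := ⟨u.length, by omega⟩
  let j : Fin (u.length + 2 + v.length) := ⟨u.length + 1, by omega⟩
  have hne : i ≠ j := by simp [i, j]
  rw [← sub_eq_zero]
  simp only [phi_ins u v i j rfl rfl]
  rw [← Finset.sum_sub_distrib, ← Finset.sum_sub_distrib, ← Finset.sum_add_distrib,
    ← Finset.sum_add_distrib, Finset.mul_sum, ← Finset.sum_sub_distrib]
  obtain ⟨Q, hQ1, hQ2⟩ := prodP_swap i j rfl
  refine Finset.sum_involution (fun σ _ => σ * Equiv.swap i j) ?_ ?_ ?_ ?_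
  · intro σ _
    have e1 : (σ * Equiv.swap i j) i = σ j := by simp
    have e2 : (σ * Equiv.swap i j) j = σ i := by simp
    have e3 : (∏ a ∈ (Finset.univ.erase i).erase j,
        (PowerSeries.C (z ((σ * Equiv.swap i j) a) ^ ((u ++ [0, 0] ++ v).getD a 0)) : R))
        = ∏ a ∈ (Finset.univ.erase i).erase j,
        (PowerSeries.C (z (σ a) ^ ((u ++ [0, 0] ++ v).getD a 0)) : R) := by
      refine Finset.prod_congr rfl fun a ha => ?_
      simp only [Finset.mem_erase, Finset.mem_univ, and_true] at ha
      rw [Equiv.Perm.mul_apply, Equiv.swap_apply_of_ne_of_ne ha.2 ha.1]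
    have e4 : Q (fun a => PowerSeries.C (z ((σ * Equiv.swap i j) a))) =
        Q (fun a => PowerSeries.C (z (σ a))) := hQ2 (fun a => PowerSeries.C (z (σ a)))
    have e5 : ((Equiv.Perm.sign (σ * Equiv.swap i j) : ℤ) : R) = - ((Equiv.Perm.sign σ : ℤ) : R) := by
      rw [Equiv.Perm.sign_mul, Equiv.Perm.sign_swap hne]; simp
    have hz1 : ∀ (a : Fin (u.length + 2 + v.length)) (t : ℤ),
        (PowerSeries.C (z a ^ (t + 1)) : R) = PowerSeries.C (z a ^ t) * PowerSeries.C (z a) := by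
      intro a t
      rw [← map_mul, zpow_add_one₀ (hz a)]
    simp only [hQ1, e1, e2, e3, e4, e5, hz1]
    ring
  · intro σ _ _ h
    have := congrArg (fun τ : Equiv.Perm _ => (σ⁻¹ * τ) i) h
    simp at this
    exact hne this.symm
  · intro σ _; exact Finset.mem_univ _
  · intro σ _; simp [mul_assoc]

theorem prodP_const {k : ℕ} (z : Fin k → ℂ) (σ : Equiv.Perm (Fin k)) :
    PowerSeries.constantCoeff (prodP fun i => PowerSeries.C (z (σ i))) =
      (Equiv.Perm.sign σ : ℤ) * ∏ i, ∏ j ∈ Finset.Ioi i, (z i - z j) := by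
  rw [← Equiv.Perm.prod_Ioi_comp_eq_sign_mul_prod σ (f := fun i j => z i - z j) (by simp)]
  simp [prodP, hbar, map_prod]

theorem phi_const (k : ℕ) (z : Fin k → ℂ) (l : List ℤ) (hl : l.length = k) :
    PowerSeries.constantCoeff (phi k z l) = (∏ i, ∏ j ∈ Finset.Ioi i, (z i - z j)) *
      ∑ σ : Equiv.Perm (Fin k), ∏ i : Fin k, z (σ i) ^ (l.getD i 0) := by
  unfold phi
  rw [if_pos hl, map_sum, Finset.mul_sum]
  refine Finset.sum_congr rfl fun σ _ => ?_
  rw [map_mul, map_mul, prodP_const, map_prod, map_intCast]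
  simp only [PowerSeries.constantCoeff_C]
  have : ((Equiv.Perm.sign σ : ℤ) : ℂ) * ((Equiv.Perm.sign σ : ℤ) : ℂ) = 1 := by
    rw [← Int.cast_mul, ← Units.val_mul]; simp
  linear_combination (∏ i : Fin k, z (σ i) ^ (l.getD i 0)) *
    (∏ i, ∏ j ∈ Finset.Ioi i, (z i - z j)) * this

theorem power_sum_zero {ι : Type*} (J : Finset ι) (a lam : ι → ℂ)
    (h : ∀ t : ℕ, ∑ x ∈ J, a x * lam x ^ (t + 1) = 0) (μ : ℂ) (hμ : μ ≠ 0) :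
    ∑ x ∈ J with lam x = μ, a x = 0 := by
  classical
  have hq : ∀ q : Polynomial ℂ, ∑ x ∈ J, a x * (lam x * q.eval (lam x)) = 0 := by
    intro q
    induction q using Polynomial.induction_on' with
    | add p q hp hq =>
      simp only [Polynomial.eval_add, mul_add, Finset.sum_add_distrib, hp, hq, add_zero]
    | monomial n c =>
      have := congrArg (fun t => c * t) (h n)
      simp only [Finset.mul_sum, mul_zero] at this
      rw [← this]
      refine Finset.sum_congr rfl fun x _ => ?_
      rw [Polynomial.eval_monomial]; ring
  let q : Polynomial ℂ := ∏ ν ∈ (J.image lam).erase μ, (Polynomial.X - Polynomial.C ν)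
  have hqq := hq q
  have hqe : ∀ w, q.eval w = ∏ ν ∈ (J.image lam).erase μ, (w - ν) := by
    intro w; simp [q, Polynomial.eval_prod]
  have h1 : ∀ x ∈ J, a x * (lam x * q.eval (lam x)) =
      if lam x = μ then a x * (μ * q.eval μ) else 0 := by
    intro x hx
    split_ifs with h
    · rw [h]
    · rw [hqe, Finset.prod_eq_zero (i := lam x)]
      · simp
      · simp only [Finset.mem_erase, Finset.mem_image]; exact ⟨h, x, hx, rfl⟩
      · simp
  rw [Finset.sum_congr rfl h1, ← Finset.sum_filter, ← Finset.sum_mul] at hqq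
  refine (mul_eq_zero.1 hqq).resolve_right (mul_ne_zero hμ ?_)
  rw [hqe, Finset.prod_ne_zero_iff]
  intro ν hν
  exact sub_ne_zero.2 (Finset.ne_of_mem_erase hν).symm

def pr {k : ℕ} (i : Fin k) : ℕ := Nat.nth Nat.Prime i

theorem pr_prime {k : ℕ} (i : Fin k) : (pr i).Prime := Nat.prime_nth_prime _

theorem pr_inj {k : ℕ} : Function.Injective (pr : Fin k → ℕ) := by
  intro i j h
  exact Fin.ext (Nat.nth_injective Nat.infinite_setOfPred_prime h)

theorem lam_inj {k : ℕ} (n m : Fin k → ℤ)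
    (h : ∏ i, (pr i : ℂ) ^ n i = ∏ i, (pr i : ℂ) ^ m i) : n = m := by
  have h' : ∏ i, (pr i : ℚ) ^ n i = ∏ i, (pr i : ℚ) ^ m i := by
    apply Rat.cast_injective (α := ℂ)
    push_cast
    exact h
  have key : ∀ (n : Fin k → ℤ) (i : Fin k), padicValRat (pr i) (∏ j, (pr j : ℚ) ^ n j) = n i := by
    intro n i
    have : Fact (pr i).Prime := ⟨pr_prime i⟩
    have hs : ∀ S : Finset (Fin k), padicValRat (pr i) (∏ j ∈ S, (pr j : ℚ) ^ n j) =
        ∑ j ∈ S, if j = i then n j else 0 := by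
      intro S
      induction S using Finset.induction_on with
      | empty => simp
      | insert a S ha ih =>
        have hz : ∀ j : Fin k, (pr j : ℚ) ^ n j ≠ 0 :=
          fun j => zpow_ne_zero _ (by exact_mod_cast (pr_prime j).ne_zero)
        rw [Finset.prod_insert ha, Finset.sum_insert ha,
          padicValRat.mul (hz a) (Finset.prod_ne_zero_iff.2 fun j _ => hz j), ih]
        congr 1
        rw [padicValRat.zpow]
        split_ifs with hai
        · subst hai; simp [padicValRat.self (pr_prime a).one_lt]
        · have : padicValNat (pr i) (pr a) = 0 := by
            have : Fact (pr a).Prime := ⟨pr_prime a⟩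
            exact padicValNat_primes (fun hh => hai (pr_inj hh.symm))
          simp [this]
    rw [hs]; simp
  funext i
  rw [← key n i, ← key m i, h']

theorem const_zero (c : Multiset ℤ →₀ R)
    (h : ∀ (k : ℕ) (z : Fin k → ℂ), (∀ i, z i ≠ 0) →
      c.sum (fun s r => r * phi k z (s.sort (· ≤ ·))) = 0) (s₀ : Multiset ℤ) :
    PowerSeries.constantCoeff (c s₀) = 0 := by
  classical
  by_cases hs₀ : s₀ ∈ c.support
  swap
  · rw [Finsupp.notMem_support_iff.1 hs₀, map_zero]
  let k := s₀.card
  let N : Multiset ℤ → Fin k → ℤ := fun s i => (s.sort (· ≤ ·)).getD i 0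
  let J : Finset (Multiset ℤ × Equiv.Perm (Fin k)) :=
    (c.support.filter fun s => s.card = k) ×ˢ Finset.univ
  let a : Multiset ℤ × Equiv.Perm (Fin k) → ℂ := fun x => PowerSeries.constantCoeff (c x.1)
  let lam : Multiset ℤ × Equiv.Perm (Fin k) → ℂ := fun x => ∏ i, (pr (x.2 i) : ℂ) ^ N x.1 i
  have hpr : ∀ i : Fin k, (pr i : ℂ) ≠ 0 := fun i => by exact_mod_cast (pr_prime i).ne_zero
  have hsum : ∀ t : ℕ, ∑ x ∈ J, a x * lam x ^ (t + 1) = 0 := by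
    intro t
    have h1 := congrArg PowerSeries.constantCoeff
      (h k (fun i => (pr i : ℂ) ^ (t + 1)) (fun i => pow_ne_zero _ (hpr i)))
    rw [map_zero, Finsupp.sum, map_sum] at h1
    have h2 : ∀ s ∈ c.support, PowerSeries.constantCoeff
        (c s * phi k (fun i => (pr i : ℂ) ^ (t + 1)) (s.sort (· ≤ ·))) =
        if s.card = k then (∏ i : Fin k, ∏ j ∈ Finset.Ioi i, ((pr i : ℂ) ^ (t + 1) - (pr j : ℂ) ^ (t + 1))) *
          ∑ σ : Equiv.Perm (Fin k), a (s, σ) * lam (s, σ) ^ (t + 1) else 0 := by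
      intro s _
      split_ifs with hs
      · rw [map_mul, phi_const _ _ _ (by simpa using hs)]
        have : ∀ σ : Equiv.Perm (Fin k), ∏ i : Fin k, ((pr (σ i) : ℂ) ^ (t + 1)) ^ ((s.sort (· ≤ ·)).getD i 0)
            = lam (s, σ) ^ (t + 1) := by
          intro σ
          simp only [lam, N]
          rw [← Finset.prod_pow]
          refine Finset.prod_congr rfl fun i _ => ?_
          rw [← zpow_natCast, ← zpow_natCast, zpow_comm]
        simp only [this, a]
        rw [← Finset.mul_sum]
        ring
      · unfold phi
        rw [if_neg (by simpa using hs)]; simp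
    rw [Finset.sum_congr rfl h2, ← Finset.sum_filter, ← Finset.mul_sum] at h1
    have h3 := (mul_eq_zero.1 h1).resolve_left ?_
    · rw [Finset.sum_product]; exact h3
    · change _ ≠ _
      rw [Finset.prod_ne_zero_iff]
      intro i _
      rw [Finset.prod_ne_zero_iff]
      intro j hj
      rw [sub_ne_zero]
      intro he
      have he' : (pr i) ^ (t + 1) = (pr j) ^ (t + 1) := by exact_mod_cast he
      have := pr_inj (Nat.pow_left_injective (by omega) he')
      rw [this] at hj; simp at hj
  have hμ : lam (s₀, 1) ≠ 0 := by
    simp only [lam]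
    exact Finset.prod_ne_zero_iff.2 fun i _ => zpow_ne_zero _ (hpr _)
  have hfin := power_sum_zero J a lam hsum (lam (s₀, 1)) hμ
  have hlist : ∀ s : Multiset ℤ, s.card = k → s.sort (· ≤ ·) = List.ofFn (N s) := by
    intro s hs
    apply List.ext_getElem
    · simp [hs]
    · intro i h1 h2
      simp [N]
      rw [List.getElem?_eq_getElem h1]; simp
  have hmem : ∀ x ∈ J.filter (fun x => lam x = lam (s₀, 1)), a x = PowerSeries.constantCoeff (c s₀) := by
    rintro ⟨s, σ⟩ hx
    simp only [Finset.mem_filter, J, Finset.mem_product, Finset.mem_univ, and_true] at hx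
    obtain ⟨⟨_, hs⟩, hl⟩ := hx
    have e1 : lam (s, σ) = ∏ i, (pr i : ℂ) ^ N s (σ⁻¹ i) := by
      simp only [lam]
      rw [← Equiv.prod_comp σ (fun i => (pr i : ℂ) ^ N s (σ⁻¹ i))]
      simp
    have e2 : lam (s₀, 1) = ∏ i, (pr i : ℂ) ^ N s₀ i := by simp [lam]
    rw [e1, e2] at hl
    have hN := lam_inj _ _ hl
    have : s = s₀ := by
      rw [← Multiset.sort_eq s (· ≤ ·), ← Multiset.sort_eq s₀ (· ≤ ·), hlist s hs, hlist s₀ rfl, ← hN,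
        Multiset.coe_eq_coe]
      exact (Equiv.Perm.ofFn_comp_perm σ⁻¹ (N s)).symm
    simp [a, this]
  rw [Finset.sum_congr rfl hmem, Finset.sum_const, nsmul_eq_mul] at hfin
  refine (mul_eq_zero.1 hfin).resolve_left ?_
  change _ ≠ _
  rw [Nat.cast_ne_zero, Finset.card_ne_zero]
  exact ⟨(s₀, 1), by simp only [Finset.mem_filter, J, Finset.mem_product, Finset.mem_univ, and_true]; exact ⟨hs₀, rfl⟩⟩

theorem coeff_zero_all (m : ℕ) : ∀ (c : Multiset ℤ →₀ R)
    (_ : ∀ (k : ℕ) (z : Fin k → ℂ), (∀ i, z i ≠ 0) →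
      c.sum (fun s r => r * phi k z (s.sort (· ≤ ·))) = 0) (s₀ : Multiset ℤ),
    PowerSeries.coeff m (c s₀) = 0 := by
  induction m with
  | zero => intro c h s₀; simpa using const_zero c h s₀
  | succ m ih =>
    intro c h s₀
    let d : Multiset ℤ →₀ R := c.mapRange
      (fun r : R => (PowerSeries.mk fun n => PowerSeries.coeff (n + 1) r : R)) (by ext; simp)
    have hd : ∀ s, c s = hbar * d s := by
      intro s
      have := PowerSeries.eq_X_mul_shift_add_const (c s)
      rw [const_zero c h s] at this
      simpa [d, hbar] using this
    have h0 := ih d ?_ s₀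
    · simpa [d] using h0
    · intro k z hz
      have h1 := h k z hz
      have h2 : c.sum (fun s r => r * phi k z (s.sort (· ≤ ·))) =
          hbar * d.sum (fun s r => r * phi k z (s.sort (· ≤ ·))) := by
        rw [Finsupp.sum, Finsupp.sum_of_support_subset d (s := c.support) Finsupp.support_mapRange _ (by simp),
          Finset.mul_sum]
        refine Finset.sum_congr rfl fun s _ => ?_
        rw [hd s]; ring
      rw [h2] at h1
      exact (mul_eq_zero.1 h1).resolve_left PowerSeries.X_ne_zero

def Phi (k : ℕ) (z : Fin k → ℂ) : FreeAlgebra R ℤ →ₗ[R] R :=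
  (FreeAlgebra.basisFreeMonoid R ℤ).constr R (fun w => phi k z w.toList)

theorem Phi_WF (k : ℕ) (z : Fin k → ℂ) (l : List ℤ) : Phi k z (WF l) = phi k z l := by
  have := (FreeAlgebra.basisFreeMonoid R ℤ).constr_basis R
    (fun w : FreeMonoid ℤ => phi k z w.toList) (FreeMonoid.ofList l)
  rw [basis_eq] at this
  exact this

theorem Phi_rel (k : ℕ) (z : Fin k → ℂ) (hz : ∀ i, z i ≠ 0) (m n : ℤ) (u v : FreeAlgebra R ℤ) :
    Phi k z (u * (E (m + 1) * E n - E n * E (m + 1) - E m * E (n + 1) + E (n + 1) * E m) * v) =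
    Phi k z (u * (hbar • (E m * E n + E n * E m)) * v) := by
  have hu : u ∈ Submodule.span R (Set.range WF) := by rw [WF_span]; trivial
  have hv : v ∈ Submodule.span R (Set.range WF) := by rw [WF_span]; trivial
  induction hu using Submodule.span_induction with
  | zero => simp
  | add x y _ _ hx hy => simp only [add_mul, map_add] at hx hy ⊢; rw [hx, hy]
  | smul a x _ hx => simp only [smul_mul_assoc, map_smul] at hx ⊢; rw [hx]
  | mem x h =>
    obtain ⟨u, rfl⟩ := h
    induction hv using Submodule.span_induction with
    | zero => simp
    | add x y _ _ hx hy => simp only [mul_add _ x y, map_add] at hx hy ⊢; rw [hx, hy]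
    | smul a x _ hx => simp only [mul_smul_comm a, map_smul] at hx ⊢; rw [hx]
    | mem x h =>
      obtain ⟨v, rfl⟩ := h
      have key : ∀ p q : ℤ, WF u * (E p * E q) * WF v = WF (u ++ [p, q] ++ v) := by
        intro p q; simp [WF_append, WF, mul_assoc]
      simp only [mul_add, mul_sub, add_mul, sub_mul, mul_smul_comm, smul_mul_assoc, smul_add, map_add,
        map_sub, map_smul, key, Phi_WF]
      rw [phi_rel k z hz u v m n]
      simp [mul_add]

def PhiCon (k : ℕ) (z : Fin k → ℂ) : RingCon (FreeAlgebra R ℤ) where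
  r x y := ∀ u v, Phi k z (u * x * v) = Phi k z (u * y * v)
  iseqv := ⟨fun _ _ _ => rfl, fun h u v => (h u v).symm, fun h h' u v => (h u v).trans (h' u v)⟩
  add' := by
    intro a b c d h h' u v
    simp only [mul_add, add_mul, map_add, h u v, h' u v]
  mul' := by
    intro a b c d h h' u v
    rw [show u * (a * c) * v = u * a * (c * v) by simp only [mul_assoc], h,
      show u * b * (c * v) = u * b * c * v by simp only [mul_assoc], h']
    simp only [mul_assoc]

theorem Phi_descends (k : ℕ) (z : Fin k → ℂ) (hz : ∀ i, z i ≠ 0) (x y : FreeAlgebra R ℤ)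
    (h : RingQuot.mkAlgHom R ERel x = RingQuot.mkAlgHom R ERel y) : Phi k z x = Phi k z y := by
  have h1 : RingQuot.mkRingHom ERel x = RingQuot.mkRingHom ERel y := by
    rw [← RingQuot.mkAlgHom_coe R ERel]; exact h
  have hw : ∀ ⦃a b⦄, ERel a b → (PhiCon k z).mk' a = (PhiCon k z).mk' b := by
    rintro _ _ ⟨m, n⟩
    exact (RingCon.eq _).2 fun u v => Phi_rel k z hz m n u v
  have h2 := congrArg (RingQuot.lift ⟨(PhiCon k z).mk', hw⟩) h1
  rw [RingQuot.lift_mkRingHom_apply, RingQuot.lift_mkRingHom_apply] at h2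
  have h3 := (RingCon.eq _).1 h2 1 1
  simpa using h3

/-- multiplication by `ℏ` is injective on `U`: if `ℏ·x = 0` then `x = 0`
(so `U` is a torsion-free `ℂ[[ℏ]]`-module). -/
theorem hbar_smul_injective : ∀ x : U, hbar • x = 0 → x = 0 := by
  intro x hx
  obtain ⟨c, hc⟩ := (Finsupp.mem_span_range_iff_exists_finsupp).1 (SU_top x)
  have hall : ∀ (k : ℕ) (z : Fin k → ℂ), (∀ i, z i ≠ 0) →
      c.sum (fun s r => r * phi k z (s.sort (· ≤ ·))) = 0 := by
    intro k z hz
    have h1 := Phi_descends k z hz (hbar • c.sum fun s r => r • WF (s.sort (· ≤ ·))) 0 (by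
      rw [map_smul, map_zero, ← hx, ← hc, Finsupp.sum, Finsupp.sum, map_sum]
      simp only [map_smul, mk_WF])
    rw [map_smul, map_zero, Finsupp.sum, map_sum] at h1
    simp only [map_smul, Phi_WF, smul_eq_mul] at h1
    exact (mul_eq_zero.1 h1).resolve_left PowerSeries.X_ne_zero
  have hc0 : c = 0 := by
    ext s m
    simpa using coeff_zero_all m c hall s
  rw [← hc, hc0]; simp

end
end
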